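/- Let d ≥ 1 and let Λ = [−1/2, 1/2]^d ⊆ ℝ^d. Let F be a finite set of pairs (x, R) ∈ ℝ^d × ℝ with 0 < R ≤ 1 for every (x, R) ∈ F. Suppose that for every (x, R) ∈ F with dist(x, Λ) ≤ 4 there exists (x', R') ∈ F such that R' ≤ R/2 and B(x', R') ∩ B(x, R) ≠ ∅. Then no ball B(x, R) with (x, R) ∈ F intersects Λ. -/

import Mathlib

open Metric

theorem exists_min_aux {α : Type*} (F : Finset α) (P : α → Prop) (f : α → ℝ)
    (p : α) (hp : p ∈ F) (h0 : P p) :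
    ∃ q ∈ F, P q ∧ ∀ r ∈ F, P r → f q ≤ f r := by
  classical
  obtain ⟨q, hq, hmin⟩ := Finset.exists_min_image (F.filter P) f
    ⟨p, Finset.mem_filter.mpr ⟨hp, h0⟩⟩
  rw [Finset.mem_filter] at hq
  exact ⟨q, hq.1, hq.2, fun r hr h => hmin r (Finset.mem_filter.mpr ⟨hr, h⟩)⟩

theorem descent_aux {E : Type*} [PseudoMetricSpace E] (Λ : Set E) (F : Finset (E × ℝ))
    (hF : ∀ p ∈ F, 0 < p.2 ∧ p.2 ≤ 1)
    (hdesc : ∀ p ∈ F, infDist p.1 Λ ≤ 4 →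
      ∃ p' ∈ F, p'.2 ≤ p.2 / 2 ∧
        (closedBall p'.1 p'.2 ∩ closedBall p.1 p.2).Nonempty) :
    ∀ p ∈ F, closedBall p.1 p.2 ∩ Λ = ∅ := by
  intro p hp
  by_contra hne
  obtain ⟨y, hy, hyΛ⟩ := Set.nonempty_iff_ne_empty.mpr hne
  have h0 : infDist p.1 Λ + 3 * p.2 ≤ 4 := by
    have h1 := infDist_le_dist_of_mem (x := p.1) hyΛ
    have h2 := mem_closedBall'.mp hy
    have h3 := hF p hp
    linarith
  obtain ⟨q, hqF, hq4, hmin⟩ : ∃ q ∈ F, infDist q.1 Λ + 3 * q.2 ≤ 4 ∧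
      ∀ r ∈ F, infDist r.1 Λ + 3 * r.2 ≤ 4 → q.2 ≤ r.2 := by
    exact exists_min_aux F (fun q => infDist q.1 Λ + 3 * q.2 ≤ 4) (fun q => q.2) p hp h0
  have hqpos := (hF q hqF).1
  obtain ⟨r, hrF, hr, z, hz1, hz2⟩ := hdesc q hqF (by linarith)
  have h1 := mem_closedBall'.mp hz1
  have h2 := mem_closedBall.mp hz2
  have h3 := dist_triangle r.1 z q.1
  have h4 : infDist r.1 Λ ≤ infDist q.1 Λ + dist r.1 q.1 := infDist_le_infDist_add_dist
  have h5 := hmin r hrF (by linarith)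
  linarith

/-- Descent argument: in a finite family of balls of radii in `(0,1]`, if every ball whose
center is within distance `4` of the cube `Λ = [-1/2,1/2]^d` is overlapped by a ball of the
family of at most half its radius, then no ball of the family intersects `Λ`. -/
theorem stmt5 (d : ℕ) (hd : 1 ≤ d)
    (Λ : Set (EuclideanSpace ℝ (Fin d)))
    (hΛ : Λ = {y | ∀ i, y i ∈ Set.Icc (-(1 / 2) : ℝ) (1 / 2)})
    (F : Finset (EuclideanSpace ℝ (Fin d) × ℝ))
    (hF : ∀ p ∈ F, 0 < p.2 ∧ p.2 ≤ 1)
    (hdesc : ∀ p ∈ F, infDist p.1 Λ ≤ 4 →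
      ∃ p' ∈ F, p'.2 ≤ p.2 / 2 ∧
        (closedBall p'.1 p'.2 ∩ closedBall p.1 p.2).Nonempty) :
    ∀ p ∈ F, closedBall p.1 p.2 ∩ Λ = ∅ := by
  exact descent_aux Λ F hF hdesc
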